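/- (Subgradient bound at the surrogate minimizer.) Let f₁, f₂ : ℝ^d → ℝ be differentiable with ∇f₁ being L₁-Lipschitz and ∇f₂ being L₂-Lipschitz, and let h₂ : ℝ^d → ℝ be convex with Lipschitz subgradients: ‖u − v‖ ≤ L_{h₂}‖x − y‖ whenever u ∈ ∂h₂(x) and v ∈ ∂h₂(y). Let H be a linear map with ‖Hu‖ ≤ M‖u‖ for all u. Suppose x_k, z_k ∈ ℝ^d, z_{h₁} ∈ ℝ^d, z_{h₂,x} ∈ ∂h₂(x_k) satisfy the optimality identity H(z_k − x_k) + ∇f₁(x_k) − ∇f₂(x_k) + z_{h₁} − z_{h₂,x} = 0. Then for every z_{h₂,z} ∈ ∂h₂(z_k), the vector z_F = ∇f₁(z_k) − ∇f₂(z_k) + z_{h₁} − z_{h₂,z} satisfies ‖z_F‖ ≤ (L₁ + L₂ + L_{h₂} + M)·‖z_k − x_k‖. -/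

import Mathlib

open RealInnerProductSpace

/-- The convex-analytic subdifferential `∂h(x)`: the slopes `z` of the affine minorants of `h` that
are exact at `x`. The space is identified with its dual through the inner product. -/
def subdifferential {E : Type*} [NormedAddCommGroup E] [InnerProductSpace ℝ E]
    (h : E → ℝ) (x : E) : Set E :=
  {z | ∀ w, h w ≥ h x + ⟪z, w - x⟫}

section SeminormedAddCommGroup

variable {E : Type*} [SeminormedAddCommGroup E]

theorem norm_sub_add_sub_le_of_add_sub_add_sub_eq_zero {p a b c s : E}
    (hzero : p + a - b + c - s = 0) (a' b' s' : E) :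
    ‖a' - b' + c - s'‖ ≤ ‖a' - a‖ + ‖b' - b‖ + ‖s' - s‖ + ‖p‖ :=
  calc ‖a' - b' + c - s'‖
      = ‖(a' - a) + (b - b') + (s - s') + -p‖ := by
        -- Subtracting the vanishing sum cancels `c`, which no bound controls.
        rw [← sub_zero (a' - b' + c - s'), ← hzero]
        congr 1
        abel
    _ ≤ ‖a' - a‖ + ‖b - b'‖ + ‖s - s'‖ + ‖-p‖ := norm_add₄_le
    _ = ‖a' - a‖ + ‖b' - b‖ + ‖s' - s‖ + ‖p‖ := by
        rw [norm_neg, norm_sub_rev b, norm_sub_rev s]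

/-- In `stmt_15`, `g₁`, `g₂` and `S` are `∇f₁`, `∇f₂` and `∂h₂`; `s`, `s'` and `c` are `z_{h₂,x}`,
`z_{h₂,z}` and `z_{h₁}`. -/
theorem stmt_15_general {g₁ g₂ H : E → E} {S : E → Set E} {L₁ L₂ LS M : ℝ}
    (hg₁ : ∀ x y, ‖g₁ x - g₁ y‖ ≤ L₁ * ‖x - y‖)
    (hg₂ : ∀ x y, ‖g₂ x - g₂ y‖ ≤ L₂ * ‖x - y‖)
    (hS : ∀ x y, ∀ u ∈ S x, ∀ v ∈ S y, ‖u - v‖ ≤ LS * ‖x - y‖)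
    (hH : ∀ u, ‖H u‖ ≤ M * ‖u‖)
    {x z c s s' : E} (hs : s ∈ S x) (hs' : s' ∈ S z)
    (hopt : H (z - x) + g₁ x - g₂ x + c - s = 0) :
    ‖g₁ z - g₂ z + c - s'‖ ≤ (L₁ + L₂ + LS + M) * ‖z - x‖ :=
  calc ‖g₁ z - g₂ z + c - s'‖
      ≤ ‖g₁ z - g₁ x‖ + ‖g₂ z - g₂ x‖ + ‖s' - s‖ + ‖H (z - x)‖ :=
        norm_sub_add_sub_le_of_add_sub_add_sub_eq_zero hopt _ _ _
    _ ≤ L₁ * ‖z - x‖ + L₂ * ‖z - x‖ + LS * ‖z - x‖ + M * ‖z - x‖ := by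
        gcongr
        exacts [hg₁ z x, hg₂ z x, hS z x s' hs' s hs, hH (z - x)]
    _ = (L₁ + L₂ + LS + M) * ‖z - x‖ := by ring

end SeminormedAddCommGroup

theorem stmt_15 (d : ℕ) (hd : 1 ≤ d)
    (f₁ f₂ h₂ : EuclideanSpace ℝ (Fin d) → ℝ)
    (hf₁ : Differentiable ℝ f₁) (hf₂ : Differentiable ℝ f₂)
    (L₁ L₂ Lh₂ M : ℝ)
    (hlip₁ : ∀ x y : EuclideanSpace ℝ (Fin d),
      ‖gradient f₁ x - gradient f₁ y‖ ≤ L₁ * ‖x - y‖)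
    (hlip₂ : ∀ x y : EuclideanSpace ℝ (Fin d),
      ‖gradient f₂ x - gradient f₂ y‖ ≤ L₂ * ‖x - y‖)
    (hh₂ : ConvexOn ℝ Set.univ h₂)
    (hliph₂ : ∀ x y u v : EuclideanSpace ℝ (Fin d),
      (∀ w, h₂ w ≥ h₂ x + ⟪u, w - x⟫) → (∀ w, h₂ w ≥ h₂ y + ⟪v, w - y⟫) →
      ‖u - v‖ ≤ Lh₂ * ‖x - y‖)
    (H : EuclideanSpace ℝ (Fin d) →ₗ[ℝ] EuclideanSpace ℝ (Fin d))
    (hHM : ∀ u : EuclideanSpace ℝ (Fin d), ‖H u‖ ≤ M * ‖u‖)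
    (xk zk zh₁ zh₂x : EuclideanSpace ℝ (Fin d))
    (hzh₂x : ∀ w, h₂ w ≥ h₂ xk + ⟪zh₂x, w - xk⟫)
    (hopt : H (zk - xk) + gradient f₁ xk - gradient f₂ xk + zh₁ - zh₂x = 0) :
    ∀ zh₂z : EuclideanSpace ℝ (Fin d),
      (∀ w, h₂ w ≥ h₂ zk + ⟪zh₂z, w - zk⟫) →
      ‖gradient f₁ zk - gradient f₂ zk + zh₁ - zh₂z‖
        ≤ (L₁ + L₂ + Lh₂ + M) * ‖zk - xk‖ := by
  intro zh₂z hzh₂z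
  exact stmt_15_general (S := subdifferential h₂) hlip₁ hlip₂
    (fun x y u hu v hv => hliph₂ x y u v hu hv) hHM hzh₂x hzh₂z hopt
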